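/- arXiv:2503.02663 — 6 statements merged into one kernel-verified Lean document; each statement's English description precedes it below -/
import Mathlib

section
/- The number of flip-equivalence classes of planar binary trees with exactly n nodes is finite and equals B n; in particular B n is a natural number for every n. -/
/-- Planar binary trees. -/
inductive T : Type where
  | nil : T
  | node : T → T → T

/-- The number of nodes of a planar binary tree. -/
def T.nodes : T → ℕ
  | .nil => 0
  | .node a b => a.nodes + b.nodes + 1

/-- Flip equivalence: the least relation such that `nil ≈ nil` and, whenever `a ≈ c` and
`b ≈ d`, both `node a b ≈ node c d` and `node a b ≈ node d c`. -/
inductive Flip : T → T → Prop where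
  | nil : Flip .nil .nil
  | node {a b c d : T} : Flip a c → Flip b d → Flip (.node a b) (.node c d)
  | swap {a b c d : T} : Flip a c → Flip b d → Flip (.node a b) (.node d c)

/-- The sequence `B` with `B 0 = B 1 = 1` and, for `n ≥ 1`,
`B (2n) = (1/2) · ∑_{k=0}^{2n-1} B (2n-1-k) · B k` and
`B (2n+1) = (1/2) · (∑_{k=0}^{2n} B (2n-k) · B k + B n)`. -/
def B : ℕ → ℚ
  | 0 => 1
  | 1 => 1
  | n + 2 =>
    (1 / 2) * ((∑ k ∈ (Finset.range (n + 2)).attach, B (n + 1 - k.1) * B k.1)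
      + if (n + 2) % 2 = 0 then 0 else B ((n + 1) / 2))
termination_by n => n
decreasing_by
  · omega
  · have := Finset.mem_range.mp k.2; omega
  · omega

theorem Flip.rfl' (t : T) : Flip t t := by
  induction t with
  | nil => exact .nil
  | node a b iha ihb => exact .node iha ihb

theorem Flip.symm' {s t : T} (h : Flip s t) : Flip t s := by
  induction h with
  | nil => exact .nil
  | node _ _ h1 h2 => exact .node h1 h2
  | swap _ _ h1 h2 => exact .swap h2 h1

theorem Flip.trans' {s t u : T} (h : Flip s t) (h' : Flip t u) : Flip s u := by
  induction h generalizing u with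
  | nil => exact h'
  | node _ _ h1 h2 =>
    cases h' with
    | node g1 g2 => exact .node (h1 g1) (h2 g2)
    | swap g1 g2 => exact .swap (h1 g1) (h2 g2)
  | swap _ _ h1 h2 =>
    cases h' with
    | node g1 g2 => exact .swap (h1 g2) (h2 g1)
    | swap g1 g2 => exact .node (h1 g2) (h2 g1)

theorem Flip.nodes_eq {s t : T} (h : Flip s t) : s.nodes = t.nodes := by
  induction h with
  | nil => rfl
  | node _ _ h1 h2 => simp only [T.nodes]; omega
  | swap _ _ h1 h2 => simp only [T.nodes]; omega

instance flipSetoid : Setoid T := ⟨Flip, Flip.rfl', Flip.symm', Flip.trans'⟩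

/-- Flip classes. -/
abbrev FQ : Type := Quotient flipSetoid

/-- Number of nodes of a class. -/
def FQ.nodes : FQ → ℕ := Quotient.lift T.nodes (fun _ _ h => Flip.nodes_eq h)

/-- The class of the empty tree. -/
def FQ.nil : FQ := Quotient.mk flipSetoid T.nil

/-- The node operation on classes. -/
def FQ.node : FQ → FQ → FQ :=
  Quotient.map₂ T.node (fun _ _ h _ _ h' => Flip.node h h')

theorem FQ.nodes_nil : FQ.nodes FQ.nil = 0 := rfl

theorem FQ.nodes_node (a b : FQ) : FQ.nodes (FQ.node a b) = a.nodes + b.nodes + 1 := by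
  induction a using Quotient.inductionOn
  induction b using Quotient.inductionOn
  rfl

theorem FQ.cases' (q : FQ) : q = FQ.nil ∨ ∃ a b, q = FQ.node a b := by
  induction q using Quotient.inductionOn with
  | h t =>
    cases t with
    | nil => exact Or.inl rfl
    | node a b => exact Or.inr ⟨Quotient.mk _ a, Quotient.mk _ b, rfl⟩

theorem FQ.node_eq_iff (a b c d : FQ) :
    FQ.node a b = FQ.node c d ↔ (a = c ∧ b = d) ∨ (a = d ∧ b = c) := by
  induction a using Quotient.inductionOn with | h a => ?_
  induction b using Quotient.inductionOn with | h b => ?_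
  induction c using Quotient.inductionOn with | h c => ?_
  induction d using Quotient.inductionOn with | h d => ?_
  constructor
  · intro h
    have h' : Flip (T.node a b) (T.node c d) := Quotient.exact h
    cases h' with
    | node h1 h2 => exact Or.inl ⟨Quotient.sound h1, Quotient.sound h2⟩
    | swap h1 h2 => exact Or.inr ⟨Quotient.sound h1, Quotient.sound h2⟩
  · rintro (⟨h1, h2⟩ | ⟨h1, h2⟩)
    · rw [h1, h2]
    · rw [h1, h2]
      exact Quotient.sound (Flip.swap (Flip.rfl' _) (Flip.rfl' _))

theorem FQ.finite_le (n : ℕ) : {q : FQ | q.nodes ≤ n}.Finite := by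
  induction n with
  | zero =>
    refine (Set.finite_singleton FQ.nil).subset ?_
    intro q hq
    rcases FQ.cases' q with rfl | ⟨a, b, rfl⟩
    · rfl
    · simp [FQ.nodes_node] at hq
  | succ n ih =>
    refine ((Set.finite_singleton FQ.nil).union (Set.Finite.image2 FQ.node ih ih)).subset ?_
    intro q hq
    rcases FQ.cases' q with rfl | ⟨a, b, rfl⟩
    · exact Or.inl rfl
    · simp only [Set.mem_ofPred_eq, FQ.nodes_node] at hq
      exact Or.inr ⟨a, by simp; omega, b, by simp; omega, rfl⟩

theorem FQ.finite_eq (n : ℕ) : {q : FQ | q.nodes = n}.Finite :=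
  (FQ.finite_le n).subset (fun _ h => le_of_eq h)

/-- The finite set of classes with n nodes. -/
noncomputable def FQ.lev (n : ℕ) : Finset FQ := (FQ.finite_eq n).toFinset

theorem FQ.mem_lev (n : ℕ) (q : FQ) : q ∈ FQ.lev n ↔ q.nodes = n := by
  simp [FQ.lev]

open Classical in
/-- Ordered pairs of classes with n nodes in total. -/
noncomputable def FQ.prs (n : ℕ) : Finset (FQ × FQ) :=
  (Finset.range (n + 1)).biUnion (fun k => FQ.lev (n - k) ×ˢ FQ.lev k)

theorem FQ.mem_prs (n : ℕ) (p : FQ × FQ) : p ∈ FQ.prs n ↔ p.1.nodes + p.2.nodes = n := by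
  simp only [FQ.prs, Finset.mem_biUnion, Finset.mem_range, Finset.mem_product, FQ.mem_lev]
  constructor
  · rintro ⟨k, hk, h1, h2⟩; omega
  · intro h; exact ⟨p.2.nodes, by omega, by omega, rfl⟩

theorem FQ.card_prs (n : ℕ) :
    (FQ.prs n).card = ∑ k ∈ Finset.range (n + 1), (FQ.lev (n - k)).card * (FQ.lev k).card := by
  classical
  unfold FQ.prs
  rw [Finset.card_biUnion]
  · simp [Finset.card_product]
  · intro i _ j _ hij
    rw [Function.onFun, Finset.disjoint_left]
    intro p hp hp'
    simp only [Finset.mem_product, FQ.mem_lev] at hp hp'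
    exact hij (hp.2.symm.trans hp'.2)

open Classical in
theorem FQ.card_diag (n : ℕ) :
    ((FQ.prs n).filter (fun p => p.1 = p.2)).card =
      if n % 2 = 0 then (FQ.lev (n / 2)).card else 0 := by
  split_ifs with h
  · symm
    refine Finset.card_bij (fun q _ => (q, q)) ?_ ?_ ?_
    · intro q hq
      rw [FQ.mem_lev] at hq
      rw [Finset.mem_filter, FQ.mem_prs]
      exact ⟨by simp only; omega, rfl⟩
    · intro a _ b _ hab
      exact congrArg Prod.fst hab
    · rintro ⟨a, b⟩ hp
      rw [Finset.mem_filter, FQ.mem_prs] at hp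
      obtain ⟨h1, h2⟩ := hp
      simp only at h1 h2
      subst h2
      exact ⟨a, by rw [FQ.mem_lev]; omega, rfl⟩
  · rw [Finset.card_eq_zero, Finset.filter_eq_empty_iff]
    intro p hp h2
    rw [FQ.mem_prs, h2] at hp
    omega

theorem FQ.two_mul_card (n : ℕ) :
    2 * (FQ.lev (n + 1)).card =
      (∑ k ∈ Finset.range (n + 1), (FQ.lev (n - k)).card * (FQ.lev k).card) +
      if n % 2 = 0 then (FQ.lev (n / 2)).card else 0 := by
  classical
  rw [← FQ.card_prs, ← FQ.card_diag]
  have hm : ∀ p ∈ FQ.prs n, FQ.node p.1 p.2 ∈ FQ.lev (n + 1) := by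
    intro p hp
    rw [FQ.mem_prs] at hp
    rw [FQ.mem_lev, FQ.nodes_node, hp]
  rw [Finset.card_eq_sum_card_fiberwise (f := fun p : FQ × FQ => FQ.node p.1 p.2) hm,
    Finset.card_eq_sum_card_fiberwise (f := fun p : FQ × FQ => FQ.node p.1 p.2)
      (s := (FQ.prs n).filter (fun p => p.1 = p.2)) (t := FQ.lev (n + 1))
      (fun p hp => hm p (Finset.mem_filter.mp hp).1),
    ← Finset.sum_add_distrib, mul_comm, ← smul_eq_mul, ← Finset.sum_const]
  refine Finset.sum_congr rfl ?_
  intro q hq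
  rw [FQ.mem_lev] at hq
  rcases FQ.cases' q with rfl | ⟨a, b, rfl⟩
  · simp [FQ.nodes_nil] at hq
  rw [FQ.nodes_node] at hq
  have e1 : (FQ.prs n).filter (fun p => FQ.node p.1 p.2 = FQ.node a b) = {(a, b), (b, a)} := by
    ext ⟨x, y⟩
    simp only [Finset.mem_filter, FQ.mem_prs, FQ.node_eq_iff, Finset.mem_insert,
      Finset.mem_singleton, Prod.mk.injEq]
    constructor
    · exact fun h => h.2
    · rintro (⟨rfl, rfl⟩ | ⟨rfl, rfl⟩)
      · exact ⟨by omega, by simp⟩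
      · exact ⟨by omega, by simp⟩
  rw [Finset.filter_comm, e1]
  by_cases hab : a = b
  · subst hab
    simp [Finset.filter_singleton]
  · have hba : ¬ b = a := fun h => hab h.symm
    simp [Finset.filter_insert, Finset.filter_singleton, hab, hba]

theorem FQ.card_lev_zero : (FQ.lev 0).card = 1 := by
  rw [Finset.card_eq_one]
  refine ⟨FQ.nil, ?_⟩
  ext q
  rw [FQ.mem_lev, Finset.mem_singleton]
  rcases FQ.cases' q with rfl | ⟨a, b, rfl⟩
  · simp [FQ.nodes_nil]
  · rw [FQ.nodes_node]
    constructor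
    · intro h; omega
    · intro h
      have := congrArg FQ.nodes h
      rw [FQ.nodes_node, FQ.nodes_nil] at this
      omega

theorem FQ.card_lev (n : ℕ) : ((FQ.lev n).card : ℚ) = B n := by
  induction n using Nat.strong_induction_on with
  | _ n ih =>
    match n, ih with
    | 0, _ => rw [FQ.card_lev_zero, B]; norm_num
    | 1, _ =>
      have h := FQ.two_mul_card 0
      simp [FQ.card_lev_zero] at h
      have h' : (FQ.lev 1).card = 1 := by omega
      rw [h', B]; norm_num
    | m + 2, ih =>
      have h := FQ.two_mul_card (m + 1)
      have h2 : (2 : ℚ) * ((FQ.lev (m + 2)).card : ℚ) =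
          (∑ k ∈ Finset.range (m + 2), B (m + 1 - k) * B k) +
          if (m + 2) % 2 = 0 then 0 else B ((m + 1) / 2) := by
        have hc := congrArg (Nat.cast : ℕ → ℚ) h
        push_cast at hc
        rw [hc]
        congr 1
        · refine Finset.sum_congr rfl ?_
          intro k hk
          rw [Finset.mem_range] at hk
          rw [ih (m + 1 - k) (by omega), ih k (by omega)]
        · by_cases hp : (m + 1) % 2 = 0
          · rw [if_pos hp, if_neg (by omega), ih _ (by omega)]
          · rw [if_neg hp, if_pos (by omega)]
      rw [B, Finset.sum_attach (Finset.range (m + 2)) (fun k => B (m + 1 - k) * B k), ← h2]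
      ring

theorem FQ.classes_eq (n : ℕ) :
    {C : Set T | ∃ t : T, t.nodes = n ∧ C = {s : T | Flip s t}} =
      (fun q : FQ => {s : T | Quotient.mk flipSetoid s = q}) '' (FQ.lev n : Set FQ) := by
  have key : ∀ t : T, {s : T | Quotient.mk flipSetoid s = Quotient.mk flipSetoid t} =
      {s : T | Flip s t} := by
    intro t
    ext s
    exact ⟨fun h => Quotient.exact h, fun h => Quotient.sound h⟩
  ext C
  constructor
  · rintro ⟨t, ht, rfl⟩
    exact ⟨Quotient.mk flipSetoid t, (FQ.mem_lev _ _).2 ht, key t⟩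
  · rintro ⟨q, hq, rfl⟩
    induction q using Quotient.inductionOn with
    | h t => exact ⟨t, (FQ.mem_lev _ _).1 hq, key t⟩

theorem FQ.classes_inj :
    Function.Injective (fun q : FQ => {s : T | Quotient.mk flipSetoid s = q}) := by
  intro p q h
  induction p using Quotient.inductionOn with
  | h t =>
    have : t ∈ {s : T | Quotient.mk flipSetoid s = q} := by
      rw [← show _ = {s : T | Quotient.mk flipSetoid s = q} from h]
      rfl
    exact this

/-- The number of flip-equivalence classes of planar binary trees with exactly `n` nodes is
finite and equals `B n`; in particular `B n` is a natural number. -/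
theorem flip_classes_card (n : ℕ) :
    {C : Set T | ∃ t : T, t.nodes = n ∧ C = {s : T | Flip s t}}.Finite ∧
    ({C : Set T | ∃ t : T, t.nodes = n ∧ C = {s : T | Flip s t}}.ncard : ℚ) = B n := by
  rw [FQ.classes_eq]
  refine ⟨(FQ.lev n).finite_toSet.image _, ?_⟩
  rw [Set.ncard_image_of_injective _ FQ.classes_inj, Set.ncard_coe_finset, FQ.card_lev]
end

section
/- In the formal power series ring ℚ⟦s⟧, the series H = Σ_{k≥0} B(2k)·s^k and I = Σ_{k≥0} B(2k+1)·s^k satisfy H = 1 + s·I·H. -/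
theorem sum_range_two_mul_split (f : ℕ → ℚ) (n : ℕ) :
    ∑ k ∈ Finset.range (2 * n), f k =
      ∑ j ∈ Finset.range n, f (2 * j) + ∑ j ∈ Finset.range n, f (2 * j + 1) := by
  induction n with
  | zero => simp
  | succ n ih =>
    rw [show 2 * (n + 1) = 2 * n + 1 + 1 by ring, Finset.sum_range_succ, Finset.sum_range_succ, ih,
      Finset.sum_range_succ, Finset.sum_range_succ]
    ring

theorem B_even_succ (m : ℕ) :
    B (2 * (m + 1)) = ∑ j ∈ Finset.range (m + 1), B (2 * j + 1) * B (2 * (m - j)) := by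
  have h : B (2 * m + 2) = (1 / 2) * ∑ k ∈ Finset.range (2 * (m + 1)), B (2 * m + 1 - k) * B k := by
    rw [B, if_pos (by omega), add_zero,
      Finset.sum_attach (Finset.range (2 * m + 2)) (fun k => B (2 * m + 1 - k) * B k)]
    rfl
  rw [show 2 * (m + 1) = 2 * m + 2 by ring, h, sum_range_two_mul_split]
  have h1 : ∑ j ∈ Finset.range (m + 1), B (2 * m + 1 - 2 * j) * B (2 * j) =
      ∑ j ∈ Finset.range (m + 1), B (2 * j + 1) * B (2 * (m - j)) := by
    rw [← Finset.sum_range_reflect]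
    refine Finset.sum_congr rfl fun j hj => ?_
    have := Finset.mem_range.mp hj
    rw [show 2 * m + 1 - 2 * (m + 1 - 1 - j) = 2 * j + 1 by omega,
      show m + 1 - 1 - j = m - j by omega]
  have h2 : ∑ j ∈ Finset.range (m + 1), B (2 * m + 1 - (2 * j + 1)) * B (2 * j + 1) =
      ∑ j ∈ Finset.range (m + 1), B (2 * j + 1) * B (2 * (m - j)) := by
    refine Finset.sum_congr rfl fun j hj => ?_
    rw [show 2 * m + 1 - (2 * j + 1) = 2 * (m - j) by omega, mul_comm]
  rw [h1, h2]
  ring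

/-- In `ℚ⟦s⟧`, the series `H = ∑ B (2k) · s^k` and `I = ∑ B (2k+1) · s^k` satisfy
`H = 1 + s·I·H`. -/
theorem H_functional_equation :
    PowerSeries.mk (fun k => B (2 * k)) =
      1 + PowerSeries.X * PowerSeries.mk (fun k => B (2 * k + 1)) *
        PowerSeries.mk (fun k => B (2 * k)) := by
  ext n
  cases n with
  | zero => simp [mul_assoc, B]
  | succ m =>
    rw [mul_assoc, map_add, PowerSeries.coeff_succ_X_mul, PowerSeries.coeff_mul,
      Finset.Nat.sum_antidiagonal_eq_sum_range_succ_mk]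
    simp only [PowerSeries.coeff_mk, PowerSeries.coeff_one]
    rw [B_even_succ]
    simp
end

section
/- In the formal power series ring ℚ⟦s⟧, the series G = Σ_{n≥0} B n · s^n, H = Σ_{k≥0} B(2k)·s^k and I = Σ_{k≥0} B(2k+1)·s^k satisfy 2·I = G + s·I² + H². -/
theorem sum_even_odd (f : ℕ → ℚ) (n : ℕ) :
    ∑ k ∈ Finset.range (2 * n + 1), f k =
      ∑ j ∈ Finset.range n, f (2 * j + 1) + ∑ j ∈ Finset.range (n + 1), f (2 * j) := by
  induction n with
  | zero => simp
  | succ m ih =>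
    rw [show 2 * (m + 1) + 1 = 2 * m + 1 + 1 + 1 by ring, Finset.sum_range_succ,
      Finset.sum_range_succ, ih, Finset.sum_range_succ (fun j => f (2 * j + 1)) m,
      Finset.sum_range_succ (fun j => f (2 * j)) (m + 1),
      show 2 * (m + 1) = 2 * m + 1 + 1 by ring]
    ring

theorem B_odd (m : ℕ) : 2 * B (2 * (m + 1) + 1) =
    B (m + 1) + ∑ k ∈ Finset.range (2 * (m + 1) + 1), B (2 * (m + 1) - k) * B k := by
  rw [show 2 * (m + 1) + 1 = (2 * m + 1) + 2 by ring, B,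
    Finset.sum_attach (Finset.range (2 * m + 1 + 2)) (fun k => B (2 * m + 1 + 1 - k) * B k),
    if_neg (by omega), show (2 * m + 1 + 1) / 2 = m + 1 by omega,
    show 2 * (m + 1) = 2 * m + 1 + 1 by ring]
  ring

/-- In `ℚ⟦s⟧`, the series `G = ∑ B n · sⁿ`, `H = ∑ B (2k) · s^k` and `I = ∑ B (2k+1) · s^k`
satisfy `2·I = G + s·I² + H²`. -/
theorem I_functional_equation :
    2 * PowerSeries.mk (fun k => B (2 * k + 1)) =
      PowerSeries.mk B + PowerSeries.X * (PowerSeries.mk (fun k => B (2 * k + 1))) ^ 2 +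
        (PowerSeries.mk (fun k => B (2 * k))) ^ 2 := by
  ext n
  rw [two_mul, map_add, map_add, map_add, ← two_mul]
  cases n with
  | zero =>
    simp [sq, PowerSeries.coeff_mul, B]
    try norm_num
  | succ m =>
    rw [PowerSeries.coeff_succ_X_mul, sq, sq, PowerSeries.coeff_mul, PowerSeries.coeff_mul,
      Finset.Nat.sum_antidiagonal_eq_sum_range_succ_mk,
      Finset.Nat.sum_antidiagonal_eq_sum_range_succ_mk]
    simp only [PowerSeries.coeff_mk]
    rw [B_odd, sum_even_odd, ← add_assoc]
    congr 1
    on_goal 1 => congr 1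
    · refine Finset.sum_congr rfl fun j hj => ?_
      have := Finset.mem_range.mp hj
      rw [show 2 * (m + 1) - (2 * j + 1) = 2 * (m - j) + 1 by omega, mul_comm]
    · refine Finset.sum_congr rfl fun j hj => ?_
      rw [show 2 * (m + 1) - 2 * j = 2 * (m + 1 - j) by omega, mul_comm]
end

section
/- For every natural number n, Σ_{k=0}^{n} K(n,k) = B n. -/
open Classical in
/-- The array `K n ℓ`: base cases (taking precedence) `K n 0 = 1` if `n = 2^r - 1` and `0`
otherwise; `K s t = 0` for `t ≥ s > 0`; `K s (s-1) = 1` for `s > 1`; otherwise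
`K (2n) ℓ = (1/2) · ∑_{k=0}^{2n-1} ∑_{v=0}^{ℓ-1} K k v · K (2n-1-k) (ℓ-1-v)`,
`K (2n+1) (2ℓ) = K n ℓ + (1/2) · ∑_{k=0}^{2n} ∑_{v=0}^{2ℓ-1} K k v · K (2n-k) (2ℓ-1-v)` and
`K (2n+1) (2ℓ+1) = (1/2) · (-K n ℓ + ∑_{k=0}^{2n} ∑_{v=0}^{2ℓ} K k v · K (2n-k) (2ℓ-v))`. -/
noncomputable def K : ℕ → ℕ → ℚ
  | n, l =>
    if l = 0 then (if ∃ r : ℕ, n = 2 ^ r - 1 then 1 else 0)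
    else if 0 < n ∧ n ≤ l then 0
    else if 1 < n ∧ l = n - 1 then 1
    else if h : n % 2 = 0 then
      (1 / 2) * ∑ k ∈ (Finset.range n).attach, ∑ v ∈ Finset.range l,
        K k.1 v * K (n - 1 - k.1) (l - 1 - v)
    else if l % 2 = 0 then
      K (n / 2) (l / 2) + (1 / 2) * ∑ k ∈ (Finset.range n).attach, ∑ v ∈ Finset.range l,
        K k.1 v * K (n - 1 - k.1) (l - 1 - v)
    else
      (1 / 2) * (- K (n / 2) (l / 2) + ∑ k ∈ (Finset.range n).attach, ∑ v ∈ Finset.range l,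
        K k.1 v * K (n - 1 - k.1) (l - 1 - v))
termination_by n l => n
decreasing_by
  · have := Finset.mem_range.mp k.2; omega
  · have := Finset.mem_range.mp k.2; omega
  · omega
  · have := Finset.mem_range.mp k.2; omega
  · have := Finset.mem_range.mp k.2; omega
  · omega
  · have := Finset.mem_range.mp k.2; omega
  · have := Finset.mem_range.mp k.2; omega

/-- Values of `K` at and beyond the diagonal vanish. -/
theorem K_zero_of_le (n l : ℕ) (hl : 0 < l) (h : n ≤ l) : K n l = 0 := by
  rw [K]
  rcases Nat.eq_zero_or_pos n with h0 | h0
  · subst h0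
    simp [hl.ne']
  · rw [if_neg hl.ne', if_pos ⟨h0, h⟩]

theorem K_zero_right_even (n : ℕ) (hn : 0 < n) (he : n % 2 = 0) : K n 0 = 0 := by
  rw [K, if_pos rfl, if_neg]
  rintro ⟨r, hr⟩
  rcases r with _ | r
  · simp at hr; omega
  · have : 0 < 2 ^ r := by positivity
    rw [pow_succ] at hr
    omega

theorem K_zero_right_odd (m : ℕ) : K (2 * m + 1) 0 = K m 0 := by
  rw [K, if_pos rfl, K, if_pos rfl]
  congr 1
  apply propext
  constructor
  · rintro ⟨r, hr⟩
    rcases r with _ | r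
    · simp at hr
    · refine ⟨r, ?_⟩
      have : 0 < 2 ^ r := by positivity
      rw [pow_succ] at hr
      omega
  · rintro ⟨r, hr⟩
    refine ⟨r + 1, ?_⟩
    have : 0 < 2 ^ r := by positivity
    rw [pow_succ]
    omega

theorem K_zero_zero : K 0 0 = 1 := by
  rw [K, if_pos rfl, if_pos ⟨0, by simp⟩]

theorem K_one_zero : K 1 0 = 1 := by
  rw [K, if_pos rfl, if_pos ⟨1, by simp⟩]

theorem K_diag (m : ℕ) : K (m + 1) m = 1 := by
  rcases m with _ | m
  · exact K_one_zero
  · rw [K, if_neg (by omega), if_neg (by omega), if_pos (by omega)]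

/-- The convolution sum. -/
noncomputable def convK (n l : ℕ) : ℚ :=
  ∑ k ∈ Finset.range n, ∑ v ∈ Finset.range l, K k v * K (n - 1 - k) (l - 1 - v)

theorem convK_attach (n l : ℕ) :
    ∑ k ∈ (Finset.range n).attach, ∑ v ∈ Finset.range l, K k.1 v * K (n - 1 - k.1) (l - 1 - v)
      = convK n l :=
  Finset.sum_attach (Finset.range n)
    (fun k => ∑ v ∈ Finset.range l, K k v * K (n - 1 - k) (l - 1 - v))

theorem convK_big (n l : ℕ) (hn : 2 ≤ n) (h : n ≤ l) : convK n l = 0 := by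
  unfold convK
  refine Finset.sum_eq_zero fun k hk => Finset.sum_eq_zero fun v hv => ?_
  rw [Finset.mem_range] at hk hv
  by_cases h1 : 0 < v ∧ k ≤ v
  · rw [K_zero_of_le k v h1.1 h1.2, zero_mul]
  · rw [K_zero_of_le (n - 1 - k) (l - 1 - v) (by omega) (by omega), mul_zero]

theorem convK_diag (m : ℕ) : convK (m + 2) (m + 1) = 2 := by
  unfold convK
  rw [Finset.sum_range_succ, Finset.sum_range_succ']
  have h1 : ∑ k ∈ Finset.range m, ∑ v ∈ Finset.range (m + 1),
      K (k + 1) v * K (m + 2 - 1 - (k + 1)) (m + 1 - 1 - v) = 0 := by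
    refine Finset.sum_eq_zero fun k hk => Finset.sum_eq_zero fun v hv => ?_
    rw [Finset.mem_range] at hk hv
    by_cases h1 : k + 1 ≤ v
    · rw [K_zero_of_le (k + 1) v (by omega) h1, zero_mul]
    · rw [K_zero_of_le (m + 2 - 1 - (k + 1)) (m + 1 - 1 - v) (by omega) (by omega), mul_zero]
  have h2 : ∑ v ∈ Finset.range (m + 1), K 0 v * K (m + 2 - 1 - 0) (m + 1 - 1 - v) = 1 := by
    rw [Finset.sum_eq_single 0]
    · rw [K_zero_zero, one_mul]; exact K_diag m
    · intro v _ hv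
      rw [K_zero_of_le 0 v (by omega) (by omega), zero_mul]
    · simp
  have h3 : ∑ v ∈ Finset.range (m + 1),
      K (m + 1) v * K (m + 2 - 1 - (m + 1)) (m + 1 - 1 - v) = 1 := by
    rw [Finset.sum_eq_single m]
    · rw [K_diag, one_mul]
      have e1 : m + 2 - 1 - (m + 1) = 0 := by omega
      have e2 : m + 1 - 1 - m = 0 := by omega
      rw [e1, e2, K_zero_zero]
    · intro v hv hv'
      rw [Finset.mem_range] at hv
      rw [K_zero_of_le (m + 2 - 1 - (m + 1)) (m + 1 - 1 - v) (by omega) (by omega), mul_zero]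
    · simp
  rw [h1, h2, h3]
  norm_num

theorem convK_zero (n : ℕ) : convK n 0 = 0 := by simp [convK]

theorem K_even (n l : ℕ) (hn : 2 ≤ n) (he : n % 2 = 0) : K n l = (1 / 2) * convK n l := by
  rcases Nat.eq_zero_or_pos l with h0 | h0
  · subst h0
    rw [convK_zero, K_zero_right_even n (by omega) he, mul_zero]
  by_cases h1 : n ≤ l
  · rw [K_zero_of_le n l h0 h1, convK_big n l hn h1, mul_zero]
  by_cases h2 : l = n - 1
  · obtain ⟨m, rfl⟩ : ∃ m, n = m + 2 := ⟨n - 2, by omega⟩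
    have : l = m + 1 := by omega
    subst this
    rw [K_diag, convK_diag]; norm_num
  rw [K, if_neg h0.ne', if_neg (by omega), if_neg (by omega), dif_pos he, convK_attach]

theorem K_odd_even (m i : ℕ) (hm : 1 ≤ m) :
    K (2 * m + 1) (2 * i) = K m i + (1 / 2) * convK (2 * m + 1) (2 * i) := by
  rcases Nat.eq_zero_or_pos i with h0 | h0
  · subst h0
    rw [mul_zero, convK_zero, K_zero_right_odd, mul_zero, add_zero]
  by_cases h1 : 2 * m + 1 ≤ 2 * i
  · rw [K_zero_of_le _ _ (by omega) h1, convK_big _ _ (by omega) h1,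
      K_zero_of_le m i h0 (by omega)]
    norm_num
  by_cases h2 : i = m
  · subst h2
    rw [K_diag, K_zero_of_le i i h0 le_rfl]
    obtain ⟨m, rfl⟩ : ∃ m, i = m + 1 := ⟨i - 1, by omega⟩
    have := convK_diag (2 * m + 1)
    rw [show 2 * (m + 1) + 1 = 2 * m + 1 + 2 by ring, show 2 * (m + 1) = 2 * m + 1 + 1 by ring,
      this]
    norm_num
  rw [K, if_neg (by omega), if_neg (by omega), if_neg (by omega), dif_neg (by omega),
    if_pos (by omega), convK_attach, show (2 * m + 1) / 2 = m by omega,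
    show 2 * i / 2 = i by omega]

theorem K_odd_odd (m i : ℕ) (hm : 1 ≤ m) :
    K (2 * m + 1) (2 * i + 1) = (1 / 2) * (- K m i + convK (2 * m + 1) (2 * i + 1)) := by
  by_cases h1 : 2 * m + 1 ≤ 2 * i + 1
  · rw [K_zero_of_le _ _ (by omega) h1, convK_big _ _ (by omega) h1,
      K_zero_of_le m i (by omega) (by omega)]
    norm_num
  rw [K, if_neg (by omega), if_neg (by omega), if_neg (by omega), dif_neg (by omega),
    if_neg (by omega), convK_attach, show (2 * m + 1) / 2 = m by omega,
    show (2 * i + 1) / 2 = i by omega]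

/-- The row polynomial of `K`. -/
noncomputable def polyK (n : ℕ) : Polynomial ℚ :=
  ∑ l ∈ Finset.range (n + 1), Polynomial.monomial l (K n l)

theorem polyK_coeff (n l : ℕ) : (polyK n).coeff l = K n l := by
  unfold polyK
  rw [Polynomial.finsetSum_coeff]
  simp only [Polynomial.coeff_monomial]
  rw [Finset.sum_ite_eq' (Finset.range (n + 1)) l]
  split_ifs with h
  · rfl
  · rw [Finset.mem_range] at h
    rw [K_zero_of_le n l (by omega) (by omega)]

theorem polyK_natDegree (n : ℕ) : (polyK n).natDegree ≤ n := by
  rw [Polynomial.natDegree_le_iff_coeff_eq_zero]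
  intro l hl
  rw [polyK_coeff, K_zero_of_le n l (by omega) (by omega)]

theorem polyK_eval (n : ℕ) :
    (polyK n).eval 1 = ∑ l ∈ Finset.range (n + 1), K n l := by
  rw [Polynomial.eval_eq_sum_range' (Nat.lt_succ_of_le (polyK_natDegree n))]
  simp [polyK_coeff]

theorem sum_convK (n : ℕ) (hn : 2 ≤ n) : ∑ l ∈ Finset.range (n + 1), convK n l
    = ∑ k ∈ Finset.range n, (polyK (n - 1 - k)).eval 1 * (polyK k).eval 1 := by
  rw [Finset.sum_range_succ', convK_zero, add_zero]
  unfold convK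
  rw [Finset.sum_comm]
  refine Finset.sum_congr rfl fun k hk => ?_
  rw [Finset.mem_range] at hk
  rw [mul_comm, ← Polynomial.eval_mul]
  have hd : (polyK k * polyK (n - 1 - k)).natDegree < n := by
    have h1 := Polynomial.natDegree_mul_le (p := polyK k) (q := polyK (n - 1 - k))
    have h2 := polyK_natDegree k
    have h3 := polyK_natDegree (n - 1 - k)
    omega
  rw [Polynomial.eval_eq_sum_range' hd]
  refine Finset.sum_congr rfl fun j _ => ?_
  rw [one_pow, mul_one, Polynomial.coeff_mul,
    Finset.Nat.sum_antidiagonal_eq_sum_range_succ_mk]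
  simp [polyK_coeff]

theorem sum_range_double (f : ℕ → ℚ) (m : ℕ) : ∑ l ∈ Finset.range (2 * m), f l
    = ∑ i ∈ Finset.range m, (f (2 * i) + f (2 * i + 1)) := by
  induction m with
  | zero => simp
  | succ m ih =>
    rw [show 2 * (m + 1) = 2 * m + 1 + 1 by ring, Finset.sum_range_succ, Finset.sum_range_succ,
      Finset.sum_range_succ, ih]
    ring

/-- For every natural number `n`, `∑_{k=0}^{n} K n k = B n`. -/
theorem sum_K_eq_B (n : ℕ) : ∑ k ∈ Finset.range (n + 1), K n k = B n := by
  induction n using Nat.strong_induction_on with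
  | _ n ih =>
  match n with
  | 0 => simp [K_zero_zero, B]
  | 1 =>
    rw [Finset.sum_range_succ, Finset.sum_range_succ, K_one_zero,
      K_zero_of_le 1 1 (by omega) (by omega), B]
    simp
  | n + 2 =>
    have hS : ∑ l ∈ Finset.range (n + 2 + 1), convK (n + 2) l
        = ∑ k ∈ Finset.range (n + 2), B (n + 1 - k) * B k := by
      rw [sum_convK _ (by omega)]
      refine Finset.sum_congr rfl fun k hk => ?_
      rw [Finset.mem_range] at hk
      rw [polyK_eval, polyK_eval, ih k hk, ih _ (by omega)]
      rfl
    rw [B, Finset.sum_attach (Finset.range (n + 2)) (fun k => B (n + 1 - k) * B k), ← hS]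
    by_cases he : (n + 2) % 2 = 0
    · rw [if_pos he, add_zero, Finset.mul_sum]
      exact Finset.sum_congr rfl fun l _ => K_even _ _ (by omega) he
    · rw [if_neg he]
      obtain ⟨m, hm⟩ : ∃ m, n + 2 = 2 * m + 1 := ⟨(n + 1) / 2, by omega⟩
      have hm' : (n + 1) / 2 = m := by omega
      rw [hm', hm, ← ih m (by omega), show 2 * m + 1 + 1 = 2 * (m + 1) by ring,
        sum_range_double, sum_range_double, ← Finset.sum_add_distrib, Finset.mul_sum]
      refine Finset.sum_congr rfl fun i _ => ?_
      rw [K_odd_even m i (by omega), K_odd_odd m i (by omega)]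
      ring
end

section
/- In the bivariate formal power series ring ℚ⟦x,y⟧, the parity-split series of B₂ satisfy Q(x,y) − R(x,y) = (y − 1)·(P₀(x,y)·P₁(x,y) + x·Q(x,y)·R(x,y)). -/
/-- The array `B2 n k` of 2-colored non-isomorphic binary tree counts: base cases
`B2 0 0 = B2 1 0 = B2 1 1 = 1`, `B2 0 k = 0` for `k > 0`, `B2 1 k = 0` for `k > 1`,
`B2 n 0 = B n` for `n > 1`, `B2 n k = 0` for `k > n`; and for `k > 0` the recurrences
`B2 (2n) k = (1/2) · ∑_{r=0}^{1} ∑_{ℓ=0}^{2n-1} ∑_{m=0}^{k-r} B2 ℓ m · B2 (2n-1-ℓ) (k-r-m)`,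
`B2 (2n+1) (2k) = (1/2) · (∑_{r=0}^{1} ∑_{ℓ=0}^{2n} ∑_{m=0}^{2k-r} B2 ℓ m · B2 (2n-ℓ) (2k-r-m) + B2 n k)`
and similarly
`B2 (2n+1) (2k+1) = (1/2) · (∑_{r=0}^{1} ∑_{ℓ=0}^{2n} ∑_{m=0}^{2k+r} B2 ℓ m · B2 (2n-ℓ) (2k+r-m) + B2 n k)`. -/
def B2 : ℕ → ℕ → ℚ
  | 0, k => if k = 0 then 1 else 0
  | 1, k => if k ≤ 1 then 1 else 0
  | n + 2, k =>
    if k = 0 then B (n + 2)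
    else if n + 2 < k then 0
    else
      (1 / 2) * ((∑ r ∈ Finset.range 2, ∑ l ∈ (Finset.range (n + 2)).attach,
          ∑ m ∈ Finset.range (k - r + 1), B2 l.1 m * B2 (n + 1 - l.1) (k - r - m))
        + if (n + 2) % 2 = 0 then 0 else B2 ((n + 1) / 2) (k / 2))
termination_by n k => n
decreasing_by
  · have := Finset.mem_range.mp l.2; omega
  · omega
  · omega

/-- The bivariate generating function `M(x,y) = ∑_{n,k} B2 n k · xⁿ y^k`. -/
noncomputable def M : MvPowerSeries (Fin 2) ℚ :=
  fun d => B2 (d 0) (d 1)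

/-- `P₀(x,y) = ∑_{n≥0} ∑_k B2 (2n) (2k) · xⁿ y^k`. -/
noncomputable def P0 : MvPowerSeries (Fin 2) ℚ :=
  fun d => B2 (2 * d 0) (2 * d 1)

/-- `P₁(x,y) = ∑_{n≥1} ∑_k B2 (2n) (2k+1) · xⁿ y^k`. -/
noncomputable def P1 : MvPowerSeries (Fin 2) ℚ :=
  fun d => if 1 ≤ d 0 then B2 (2 * d 0) (2 * d 1 + 1) else 0

/-- `Q(x,y) = ∑_{n≥0} ∑_k B2 (2n+1) (2k) · xⁿ y^k`. -/
noncomputable def Q : MvPowerSeries (Fin 2) ℚ :=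
  fun d => B2 (2 * d 0 + 1) (2 * d 1)

/-- `R(x,y) = ∑_{n≥0} ∑_k B2 (2n+1) (2k+1) · xⁿ y^k`. -/
noncomputable def R : MvPowerSeries (Fin 2) ℚ :=
  fun d => B2 (2 * d 0 + 1) (2 * d 1 + 1)

theorem B2_zero_right (n : ℕ) : B2 n 0 = B n := by
  match n with
  | 0 => simp [B2, B]
  | 1 => simp [B2, B]
  | n + 2 => rw [B2]; simp

theorem B2_of_lt (n k : ℕ) (h : n < k) : B2 n k = 0 := by
  match n with
  | 0 => rw [B2, if_neg (by omega)]
  | 1 => rw [B2, if_neg (by omega)]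
  | n + 2 => rw [B2, if_neg (by omega), if_pos h]

/-- The double convolution of `B2` with itself. -/
def DC (n k : ℕ) : ℚ :=
  ∑ l ∈ Finset.range (n + 1), ∑ m ∈ Finset.range (k + 1), B2 l m * B2 (n - l) (k - m)

theorem DC_of_lt (n k : ℕ) (h : n < k) : DC n k = 0 := by
  unfold DC
  refine Finset.sum_eq_zero fun l hl => Finset.sum_eq_zero fun m hm => ?_
  rw [Finset.mem_range] at hl hm
  by_cases h1 : l < m
  · rw [B2_of_lt l m h1, zero_mul]
  · rw [B2_of_lt (n - l) (k - m) (by omega), mul_zero]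

theorem B2_succ_succ (n k : ℕ) : B2 (n + 1) (k + 1) =
    (1 / 2) * (DC n (k + 1) + DC n k + if n % 2 = 0 then B2 (n / 2) ((k + 1) / 2) else 0) := by
  by_cases h : n + 1 < k + 1
  · rw [B2_of_lt _ _ h, DC_of_lt _ _ (by omega), DC_of_lt _ _ (by omega)]
    split_ifs with h2
    · rw [B2_of_lt _ _ (by omega)]; norm_num
    · norm_num
  match n with
  | 0 =>
    have : k = 0 := by omega
    subst this
    simp [DC, B2, Finset.sum_range_succ]; norm_num
  | n + 1 =>
    rw [B2, if_neg (by omega), if_neg (by omega)]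
    congr 1
    congr 1
    · rw [Finset.sum_range_succ, Finset.sum_range_one]
      unfold DC
      congr 1
      · exact Finset.sum_attach (Finset.range (n + 2)) (fun l => ∑ m ∈ Finset.range (k + 1 - 0 + 1),
          B2 l m * B2 (n + 1 - l) (k + 1 - 0 - m))
      · exact Finset.sum_attach (Finset.range (n + 2)) (fun l => ∑ m ∈ Finset.range (k + 1 - 1 + 1),
          B2 l m * B2 (n + 1 - l) (k + 1 - 1 - m))
    · split_ifs <;> first | rfl | omega

theorem B2_succ_zero (n : ℕ) : B2 (n + 1) 0 =
    (1 / 2) * (DC n 0 + if n % 2 = 0 then B2 (n / 2) 0 else 0) := by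
  match n with
  | 0 => simp [DC, B2]; norm_num
  | n + 1 =>
    rw [B2_zero_right, B]
    congr 1
    congr 1
    · rw [Finset.sum_attach (Finset.range (n + 2)) (fun l => B (n + 1 - l) * B l)]
      unfold DC
      refine Finset.sum_congr rfl fun l _ => ?_
      simp [B2_zero_right, mul_comm]
    · rw [B2_zero_right]
      split_ifs <;> first | rfl | omega

theorem sum_range_even (f : ℕ → ℚ) (n : ℕ) : ∑ i ∈ Finset.range (2 * n), f i =
    ∑ i ∈ Finset.range n, f (2 * i) + ∑ i ∈ Finset.range n, f (2 * i + 1) := by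
  induction n with
  | zero => simp
  | succ n ih =>
    rw [show 2 * (n + 1) = 2 * n + 1 + 1 by ring, Finset.sum_range_succ, Finset.sum_range_succ, ih,
      Finset.sum_range_succ, Finset.sum_range_succ]
    ring

theorem DC_odd (n k : ℕ) : DC n (2 * k + 1) = 2 * ∑ l ∈ Finset.range (n + 1),
    ∑ i ∈ Finset.range (k + 1), B2 l (2 * i) * B2 (n - l) (2 * (k - i) + 1) := by
  unfold DC
  rw [show 2 * k + 1 + 1 = 2 * (k + 1) by ring]
  simp_rw [sum_range_even]
  rw [Finset.sum_add_distrib, two_mul (Finset.sum _ _ : ℚ)]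
  refine congrArg₂ (· + ·) ?_ ?_
  · refine Finset.sum_congr rfl fun l _ => Finset.sum_congr rfl fun i hi => ?_
    rw [Finset.mem_range] at hi
    rw [show 2 * k + 1 - 2 * i = 2 * (k - i) + 1 by omega]
  · refine (Finset.sum_range_reflect _ _).symm.trans ?_
    refine Finset.sum_congr rfl fun l hl => ?_
    refine (Finset.sum_range_reflect _ _).symm.trans ?_
    refine Finset.sum_congr rfl fun i hi => ?_
    rw [Finset.mem_range] at hi hl
    rw [show n + 1 - 1 - l = n - l by omega, show n - (n - l) = l by omega,
      show 2 * (k + 1 - 1 - i) + 1 = 2 * (k - i) + 1 by omega,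
      show 2 * k + 1 - (2 * (k - i) + 1) = 2 * i by omega, mul_comm]

theorem coeff_mul_two (f g : MvPowerSeries (Fin 2) ℚ) (F G : ℕ → ℕ → ℚ)
    (hf : ∀ d, MvPowerSeries.coeff d f = F (d 0) (d 1))
    (hg : ∀ d, MvPowerSeries.coeff d g = G (d 0) (d 1)) (d : Fin 2 →₀ ℕ) :
    MvPowerSeries.coeff d (f * g) = ∑ l ∈ Finset.range (d 0 + 1), ∑ m ∈ Finset.range (d 1 + 1),
      F l m * G (d 0 - l) (d 1 - m) := by
  classical
  rw [MvPowerSeries.coeff_mul]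
  rw [← Finset.sum_product']
  refine Finset.sum_bij' (fun p _ => (p.1 0, p.1 1))
    (fun q _ => (Finsupp.single 0 q.1 + Finsupp.single 1 q.2,
      Finsupp.single 0 (d 0 - q.1) + Finsupp.single 1 (d 1 - q.2))) ?_ ?_ ?_ ?_ ?_
  · rintro ⟨p, q⟩ h
    rw [Finset.HasAntidiagonal.mem_antidiagonal] at h
    simp only at h
    subst h
    simp
  · rintro ⟨p, q⟩ h
    simp at h
    rw [Finset.HasAntidiagonal.mem_antidiagonal]
    ext i
    fin_cases i <;> simp <;> omega
  · rintro ⟨p, q⟩ h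
    rw [Finset.HasAntidiagonal.mem_antidiagonal] at h
    simp only at h
    subst h
    ext i <;> fin_cases i <;> simp
  · rintro ⟨p, q⟩ h
    simp
  · rintro ⟨p, q⟩ h
    rw [Finset.HasAntidiagonal.mem_antidiagonal] at h
    simp only at h
    subst h
    simp [hf, hg]

theorem coeff_X_mul_two (s : Fin 2) (f : MvPowerSeries (Fin 2) ℚ) (d : Fin 2 →₀ ℕ) :
    MvPowerSeries.coeff d (MvPowerSeries.X s * f) =
      if 1 ≤ d s then MvPowerSeries.coeff (d - Finsupp.single s 1) f else 0 := by
  classical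
  rw [MvPowerSeries.X, MvPowerSeries.coeff_monomial_mul]
  simp

theorem key (d : Fin 2 →₀ ℕ) :
    MvPowerSeries.coeff d (P0 * P1 + MvPowerSeries.X 0 * Q * R) =
      (1 / 2) * DC (2 * d 0) (2 * d 1 + 1) := by
  rw [DC_odd, map_add, mul_assoc, coeff_X_mul_two,
    coeff_mul_two P0 P1 (fun n k => B2 (2 * n) (2 * k)) (fun n k => B2 (2 * n) (2 * k + 1))
      (fun d => rfl) ?_,
    coeff_mul_two Q R (fun n k => B2 (2 * n + 1) (2 * k)) (fun n k => B2 (2 * n + 1) (2 * k + 1))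
      (fun d => rfl) (fun d => rfl), Finset.sum_range_succ _ (2 * d 0), sum_range_even,
      Finset.sum_range_succ _ (d 0)]
  · have h1 : (if 1 ≤ d 0 then ∑ l ∈ Finset.range ((d - Finsupp.single 0 1 : Fin 2 →₀ ℕ) 0 + 1),
        ∑ m ∈ Finset.range ((d - Finsupp.single 0 1 : Fin 2 →₀ ℕ) 1 + 1), B2 (2 * l + 1) (2 * m) *
          B2 (2 * ((d - Finsupp.single 0 1 : Fin 2 →₀ ℕ) 0 - l) + 1)
            (2 * ((d - Finsupp.single 0 1 : Fin 2 →₀ ℕ) 1 - m) + 1) else 0) =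
        ∑ l ∈ Finset.range (d 0), ∑ m ∈ Finset.range (d 1 + 1), B2 (2 * l + 1) (2 * m) *
          B2 (2 * d 0 - (2 * l + 1)) (2 * (d 1 - m) + 1) := by
      split_ifs with h
      · simp only [Finsupp.coe_tsub, Pi.sub_apply, Finsupp.single_eq_same]
        rw [show d 0 - 1 + 1 = d 0 by omega]
        refine Finset.sum_congr rfl fun l hl => ?_
        rw [Finset.mem_range] at hl
        rw [show 2 * d 0 - (2 * l + 1) = 2 * (d 0 - 1 - l) + 1 by omega]
        simp
      · rw [show d 0 = 0 by omega]; simp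
    rw [h1]
    simp only [Nat.mul_sub]
    ring
  · intro d
    change (if 1 ≤ d 0 then B2 (2 * d 0) (2 * d 1 + 1) else 0) = _
    split_ifs with h
    · rfl
    · rw [B2_of_lt]; omega

/-- In `ℚ⟦x,y⟧`, `Q(x,y) − R(x,y) = (y − 1)·(P₀(x,y)·P₁(x,y) + x·Q(x,y)·R(x,y))`. -/
theorem Q_sub_R_eq :
    Q - R = (MvPowerSeries.X 1 - 1) * (P0 * P1 + MvPowerSeries.X 0 * Q * R) := by
  ext d
  rw [sub_mul, one_mul, map_sub, map_sub, coeff_X_mul_two, key, key]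
  change B2 (2 * d 0 + 1) (2 * d 1) - B2 (2 * d 0 + 1) (2 * d 1 + 1) = _
  rw [B2_succ_succ]
  have h0 : (d - Finsupp.single 1 1 : Fin 2 →₀ ℕ) 0 = d 0 := by simp
  have h1 : (d - Finsupp.single 1 1 : Fin 2 →₀ ℕ) 1 = d 1 - 1 := by simp
  rw [h0, h1]
  rcases hk : d 1 with _ | k
  · rw [mul_zero, B2_succ_zero]
    simp
    ring
  · rw [show 2 * (k + 1) = 2 * k + 1 + 1 by ring, B2_succ_succ]
    simp only [Nat.add_sub_cancel, show (2 * k + 1 + 1 + 1) / 2 = k + 1 by omega,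
      show (2 * k + 1 + 1) / 2 = k + 1 by omega]
    simp
    ring
end

section
/- For all natural numbers n and ℓ, K₃(n,ℓ,0) = K(n,ℓ). -/
open Classical in
/-- The array `K3 n ℓ c`: base cases (taking precedence) `K3 0 0 0 = 1`; `K3 n ℓ c = 0`
whenever `ℓ ≥ n > 0` or `c > n`; `K3 n (n-1) c = C(n,c)` for `n ≥ 1` and `0 ≤ c ≤ n`;
`K3 n 0 c = 1` if `n = 2^r - 1` for some `r ≥ 1` and `0 ≤ c ≤ n`, and `K3 n 0 c = 0` for
other `n ≥ 1`; otherwise, for `p, q, r ∈ {0,1}`,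
`K3 (2n+p) (2ℓ+q) (2c+r) = p·(-1/2)^q·K3 n ℓ c + (1/2) · ∑_{δ=0, δ≤2c+r}^{1} ∑_{k=0}^{2n+p-1}
∑_{v=0}^{2ℓ+q-1} ∑_{m=0}^{2c+r-δ} K3 k v m · K3 (2n+p-1-k) (2ℓ+q-1-v) (2c+r-δ-m)`. -/
noncomputable def K3 : ℕ → ℕ → ℕ → ℚ
  | 0, l, c => if l = 0 ∧ c = 0 then 1 else 0
  | n + 1, l, c =>
    if n + 1 ≤ l ∨ n + 1 < c then 0
    else if l = n then ((n + 1).choose c : ℚ)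
    else if l = 0 then (if ∃ r : ℕ, 1 ≤ r ∧ n + 1 = 2 ^ r - 1 then 1 else 0)
    else
      (if (n + 1) % 2 = 1 then ((-1 : ℚ) / 2) ^ (l % 2) * K3 ((n + 1) / 2) (l / 2) (c / 2)
        else 0)
      + (1 / 2) * ∑ δ ∈ Finset.range 2, if δ ≤ c then
          (∑ k ∈ (Finset.range (n + 1)).attach, ∑ v ∈ Finset.range l,
            ∑ m ∈ Finset.range (c - δ + 1),
              K3 k.1 v m * K3 (n - k.1) (l - 1 - v) (c - δ - m)) else 0
termination_by n l c => n
decreasing_by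
  · omega
  · have := Finset.mem_range.mp k.2; omega
  · omega

/-- For all natural numbers `n` and `ℓ`, `K3 n ℓ 0 = K n ℓ`. -/
theorem K3_zero_color_eq_K (n ℓ : ℕ) : K3 n ℓ 0 = K n ℓ := by
  induction n using Nat.strong_induction_on generalizing ℓ with
  | _ n ih =>
  rcases n with _ | n
  · rw [K3, K]
    by_cases hl : ℓ = 0
    · have : ∃ r : ℕ, 0 = 2 ^ r - 1 := ⟨0, by norm_num⟩
      rw [if_pos ⟨hl, rfl⟩, if_pos hl, if_pos this]
    · simp [hl]
  · have hS : (∑ k ∈ (Finset.range (n + 1)).attach, ∑ v ∈ Finset.range ℓ,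
        K3 k.1 v 0 * K3 (n - k.1) (ℓ - 1 - v) 0) =
        ∑ k ∈ (Finset.range (n + 1)).attach, ∑ v ∈ Finset.range ℓ,
        K k.1 v * K (n + 1 - 1 - k.1) (ℓ - 1 - v) := by
      refine Finset.sum_congr rfl fun k _ => Finset.sum_congr rfl fun v _ => ?_
      have hk := Finset.mem_range.mp k.2
      rw [ih k.1 hk, ih (n - k.1) (by omega), Nat.add_sub_cancel]
    have hh : K3 ((n + 1) / 2) (ℓ / 2) 0 = K ((n + 1) / 2) (ℓ / 2) := ih _ (by omega) _
    rw [K3, K]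
    by_cases hl : ℓ = 0
    · have e : (∃ r : ℕ, 1 ≤ r ∧ n + 1 = 2 ^ r - 1) ↔ ∃ r : ℕ, n + 1 = 2 ^ r - 1 := by
        constructor
        · rintro ⟨r, _, h⟩
          exact ⟨r, h⟩
        · rintro ⟨r, h⟩
          refine ⟨r, ?_, h⟩
          rcases r with _ | r
          · simp at h
          · omega
      rw [if_neg (show ¬(n + 1 ≤ ℓ ∨ n + 1 < 0) by omega)]
      by_cases hn : ℓ = n
      · have : ∃ r : ℕ, n + 1 = 2 ^ r - 1 := ⟨1, by omega⟩
        rw [if_pos hn, if_pos hl, if_pos this]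
        simp
      · rw [if_neg hn, if_pos hl, if_pos hl]
        by_cases h : ∃ r : ℕ, n + 1 = 2 ^ r - 1
        · rw [if_pos h, if_pos (e.2 h)]
        · rw [if_neg h, if_neg (fun h' => h (e.1 h'))]
    · by_cases h1 : n + 1 ≤ ℓ
      · rw [if_pos (Or.inl h1), if_neg hl, if_pos ⟨by omega, h1⟩]
      · rw [if_neg (show ¬(n + 1 ≤ ℓ ∨ n + 1 < 0) by omega)]
        by_cases h2 : ℓ = n
        · rw [if_pos h2, if_neg hl, if_neg (show ¬(0 < n + 1 ∧ n + 1 ≤ ℓ) by omega),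
            if_pos ⟨by omega, by omega⟩]
          simp
        · rw [if_neg h2, if_neg hl, if_neg hl, if_neg (show ¬(0 < n + 1 ∧ n + 1 ≤ ℓ) by omega),
            if_neg (show ¬(1 < n + 1 ∧ ℓ = n + 1 - 1) by omega), ← hS, ← hh]
          rw [Finset.sum_range_succ, Finset.sum_range_one, if_pos (le_refl 0),
            if_neg (show ¬(1 ≤ 0) by omega)]
          simp only [Nat.sub_zero, Nat.zero_add, Finset.sum_range_one, Nat.zero_div, add_zero]
          by_cases hp : (n + 1) % 2 = 0
          · rw [if_neg (by omega), dif_pos hp, zero_add]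
          · rw [if_pos (by omega), dif_neg hp]
            by_cases hq : ℓ % 2 = 0
            · rw [if_pos hq, hq, pow_zero, one_mul]
            · rw [if_neg hq, show ℓ % 2 = 1 by omega]
              ring
end
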